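/- Let d ≥ 2 be an integer and let N be a Poisson random variable such that ∑_{i=1}^{d-1} P(N = i)·(i/d) + P(N ≥ d) = 1 − 1/(2d). Then P(N ≥ d) + (1 − P(N ≥ d))·(1 − 1/(2d)) ≥ 1 − 1/(4d). -/

import Mathlib

open MeasureTheory

/-!
In the truncated mean `E[min(N, d)] / d = ∑_{i<d} P(N = i)·(i/d) + P(N ≥ d)`, the events `N = i`
with `i < d` have weight at most `1 - 1/d`, so it is at most `1 - P(N < d) / d`. If it is at least
`1 - 1/(2d)`, then `P(N < d) ≤ 1/2`, while the quantity to be bounded equals `1 - P(N < d) / (2d)`.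
-/

lemma sum_Icc_mul_div_le_one_sub_mul_sum_range {K : Type*} [Field K] [LinearOrder K]
    [IsStrictOrderedRing K] {w : ℕ → K} (hw : ∀ i, 0 ≤ w i) (d : ℕ) :
    ∑ i ∈ Finset.Icc 1 (d - 1), w i * ((i : K) / d) ≤ (1 - 1 / d) * ∑ i ∈ Finset.range d, w i := by
  have h_subset : Finset.Icc 1 (d - 1) ⊆ Finset.range d := by grind
  have h_weight : ∀ i ∈ Finset.range d, (i : K) / d ≤ 1 - 1 / d := by
    intro i hi
    have hid : i + 1 ≤ d := Finset.mem_range.mp hi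
    rw [le_sub_iff_add_le, ← add_div]
    exact div_le_one_of_le₀ (mod_cast hid) (Nat.cast_nonneg d)
  calc ∑ i ∈ Finset.Icc 1 (d - 1), w i * ((i : K) / d)
      ≤ ∑ i ∈ Finset.range d, w i * ((i : K) / d) :=
        Finset.sum_le_sum_of_subset_of_nonneg h_subset fun i _ _ ↦
          mul_nonneg (hw i) (by positivity)
    _ ≤ ∑ i ∈ Finset.range d, w i * (1 - 1 / d) :=
        Finset.sum_le_sum fun i hi ↦ mul_le_mul_of_nonneg_left (h_weight i hi) (hw i)
    _ = (1 - 1 / d) * ∑ i ∈ Finset.range d, w i := by rw [← Finset.sum_mul, mul_comm]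

section Law

variable {ν : Measure ℕ} [IsFiniteMeasure ν] {d : ℕ}

lemma sum_Icc_mul_div_add_measureReal_Ici_le :
    ∑ i ∈ Finset.Icc 1 (d - 1), ν.real {i} * ((i : ℝ) / d) + ν.real (Set.Ici d)
      ≤ ν.real Set.univ - ν.real (Set.Iio d) / d := by
  have h_sum : ∑ i ∈ Finset.range d, ν.real {i} = ν.real (Set.Iio d) := by
    rw [sum_measureReal_singleton, Finset.coe_range]
  have h_compl : ν.real (Set.Iio d) + ν.real (Set.Ici d) = ν.real Set.univ := by
    rw [← Set.compl_Iio, measureReal_add_measureReal_compl measurableSet_Iio]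
  calc ∑ i ∈ Finset.Icc 1 (d - 1), ν.real {i} * ((i : ℝ) / d) + ν.real (Set.Ici d)
      ≤ (1 - 1 / d) * ν.real (Set.Iio d) + ν.real (Set.Ici d) := by
        rw [← h_sum]
        gcongr
        exact sum_Icc_mul_div_le_one_sub_mul_sum_range (fun _ ↦ measureReal_nonneg) d
    _ = ν.real Set.univ - ν.real (Set.Iio d) / d := by rw [← h_compl]; ring

lemma measureReal_Iio_le_of_le_sum_Icc_mul_div_add_measureReal_Ici (hd : 0 < d) {c : ℝ}
    (h : ν.real Set.univ - c / d
      ≤ ∑ i ∈ Finset.Icc 1 (d - 1), ν.real {i} * ((i : ℝ) / d) + ν.real (Set.Ici d)) :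
    ν.real (Set.Iio d) ≤ c := by
  have h_div : ν.real (Set.Iio d) / d ≤ c / d :=
    (sub_le_sub_iff_left _).mp (h.trans sum_Icc_mul_div_add_measureReal_Ici_le)
  exact (div_le_div_iff_of_pos_right (Nat.cast_pos.mpr hd)).mp h_div

end Law

theorem stmt2_general {Ω : Type*} [MeasurableSpace Ω] {ℙ : Measure Ω} [IsProbabilityMeasure ℙ]
    {N : Ω → ℕ} (hN : AEMeasurable N ℙ) {d : ℕ} (hd : 0 < d)
    (h : 1 - 1 / (2 * (d : ℝ))
      ≤ ∑ i ∈ Finset.Icc 1 (d - 1), ℙ.real {ω | N ω = i} * ((i : ℝ) / d)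
        + ℙ.real {ω | d ≤ N ω}) :
    1 - 1 / (4 * (d : ℝ))
      ≤ ℙ.real {ω | d ≤ N ω} + (1 - ℙ.real {ω | d ≤ N ω}) * (1 - 1 / (2 * (d : ℝ))) := by
  have : IsProbabilityMeasure (ℙ.map N) := Measure.isProbabilityMeasure_map hN
  have h_law (s : Set ℕ) : (ℙ.map N).real s = ℙ.real (N ⁻¹' s) :=
    map_measureReal_apply_of_aemeasurable hN .of_discrete
  have h_lt : (ℙ.map N).real (Set.Iio d) ≤ 1 / 2 := by
    apply measureReal_Iio_le_of_le_sum_Icc_mul_div_add_measureReal_Ici hd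
    simp only [h_law, Set.preimage_univ, probReal_univ, div_div]
    exact h
  have h_ge : 1 - ℙ.real {ω | d ≤ N ω} = (ℙ.map N).real (Set.Iio d) := by
    rw [← Set.compl_Ici, probReal_compl_eq_one_sub measurableSet_Ici, h_law]
    rfl
  calc 1 - 1 / (4 * (d : ℝ)) = 1 - 1 / 2 * (1 / (2 * d)) := by ring
    _ ≤ 1 - (1 - ℙ.real {ω | d ≤ N ω}) * (1 / (2 * d)) := by rw [h_ge]; gcongr
    _ = ℙ.real {ω | d ≤ N ω} + (1 - ℙ.real {ω | d ≤ N ω}) * (1 - 1 / (2 * (d : ℝ))) := by ring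

/-- Let `d ≥ 2` be an integer and `N` a Poisson random variable (with some mean `μ ≥ 0`)
such that `∑_{i=1}^{d−1} P(N = i)·(i/d) + P(N ≥ d) = 1 − 1/(2d)`.  Then
`P(N ≥ d) + (1 − P(N ≥ d))·(1 − 1/(2d)) ≥ 1 − 1/(4d)`. -/
theorem stmt2 {Ω : Type*} [MeasurableSpace Ω] (ℙ : Measure Ω) [IsProbabilityMeasure ℙ]
    (N : Ω → ℕ) (hNm : Measurable N) (μ : ℝ) (hμ : 0 ≤ μ)
    (hN : ∀ i : ℕ, ℙ {ω | N ω = i} = ENNReal.ofReal (Real.exp (-μ) * μ ^ i / (Nat.factorial i)))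
    (d : ℕ) (hd : 2 ≤ d)
    (h : ∑ i ∈ Finset.Icc 1 (d - 1), (ℙ {ω | N ω = i}).toReal * ((i : ℝ) / (d : ℝ))
          + (ℙ {ω | d ≤ N ω}).toReal = 1 - 1 / (2 * (d : ℝ))) :
    (ℙ {ω | d ≤ N ω}).toReal
        + (1 - (ℙ {ω | d ≤ N ω}).toReal) * (1 - 1 / (2 * (d : ℝ)))
      ≥ 1 - 1 / (4 * (d : ℝ)) :=
  stmt2_general hNm.aemeasurable (by lia) h.ge
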